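/- Let m ≥ 2 and let μ be a probability measure on the closed ball B_r(0) ⊂ ℝ^m invariant under rotations about the origin, and let α > r. For z ∈ B_r(0) define H^{(α,μ,m)}(z) := ∫_{B_r(0)}(α − ‖x‖) dμ(x) − ∫_{B_α(z) ∩ B_r(0)}(α − d(z,x)) dμ(x). Then H^{(α,μ,m)}(z) ≥ T^{(α,m)}(z), where T^{(α,m)} is the analogous quantity with μ replaced by the uniform measure μ^r on the sphere of radius r. -/

import Mathlib

open MeasureTheory Metric Real
open scoped ENNReal

/-- The uniform probability measure on the sphere of radius `s` centered at the origin
in `ℝ^m`; for `s = 0` it is the Dirac measure at the origin. -/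
noncomputable def sphereUniform (m : ℕ) (s : ℝ) : Measure (EuclideanSpace ℝ (Fin m)) :=
  if s = 0 then Measure.dirac 0
  else (μH[(m : ℝ) - 1] (sphere (0 : EuclideanSpace ℝ (Fin m)) s))⁻¹ •
    (μH[(m : ℝ) - 1]).restrict (sphere (0 : EuclideanSpace ℝ (Fin m)) s)

/-- `H^{(α,μ,m)}(z) = ∫_{B_r(0)}(α − ‖x‖) dμ(x) − ∫_{B_α(z) ∩ B_r(0)}(α − d(z,x)) dμ(x)`. -/
noncomputable def Hfun (m : ℕ) (α r : ℝ) (μ : Measure (EuclideanSpace ℝ (Fin m)))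
    (z : EuclideanSpace ℝ (Fin m)) : ℝ :=
  (∫ x in closedBall (0 : EuclideanSpace ℝ (Fin m)) r, (α - ‖x‖) ∂μ) -
    ∫ x in closedBall z α ∩ closedBall (0 : EuclideanSpace ℝ (Fin m)) r,
      (α - dist z x) ∂μ

/-- `T^{(α,m)}` is `H^{(α,μ,m)}` with `μ` the uniform measure on the radius-`r` sphere. -/
noncomputable def Tfun (m : ℕ) (α r : ℝ) (z : EuclideanSpace ℝ (Fin m)) : ℝ :=
  Hfun m α r (sphereUniform m r) z

/-!
Up to the constant `α`, `H` is the potential `∫ min (d(z, x)) α dμ(x)` minus the mean norm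
`∫ ‖x‖ dμ(x)`. Rotation invariance lets `z` be averaged over the sphere of radius `‖z‖`. By Fubini
it then suffices to compare, for a single `x` in the ball, the averages of `min (d(w, x)) α` and of
`min (d(w, x')) α` over `‖w‖ = ‖z‖`, where `x'` is the radial projection of `x` to the sphere of
radius `r`. The second average is the potential of the uniform measure at `z`, because the distance
between `t • y` and `x'` is symmetric in `x'` and `y` when both have norm `r`. Moving `x` to `x'`
raises the average by at most `d(x, x') = r - ‖x‖`, which is the difference of the norm terms.
-/

open Module Set
open scoped NNReal Pointwise RealInnerProductSpace

section HausdorffMeasureSphere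

lemma hausdorffMeasure_image_lt_top_of_locallyLipschitz {E F : Type*} [NormedAddCommGroup F]
    [NormedSpace ℝ F] [FiniteDimensional ℝ F] [MeasurableSpace F] [BorelSpace F]
    [MetricSpace E] [MeasurableSpace E] [BorelSpace E] {f : F → E} (hf : LocallyLipschitz f)
    {K : Set F} (hK : IsCompact K) : μH[finrank ℝ F] (f '' K) < ∞ := by
  obtain ⟨C, hC⟩ := hf.locallyLipschitzOn.exists_lipschitzOnWith_of_compact hK
  calc μH[finrank ℝ F] (f '' K) ≤ (C : ℝ≥0∞) ^ (finrank ℝ F : ℝ) * μH[finrank ℝ F] K :=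
        hC.hausdorffMeasure_image_le (Nat.cast_nonneg _)
    _ < ∞ := ENNReal.mul_lt_top (by simp) hK.measure_lt_top

variable {E : Type*} [NormedAddCommGroup E] [InnerProductSpace ℝ E]

lemma closedBall_subset_orthogonalProjectionOnto_image_sphere (U : Submodule ℝ E)
    [U.HasOrthogonalProjection] {e : E} (he : e ∈ Uᗮ) (he_norm : ‖e‖ = 1) (r : ℝ) :
    closedBall (0 : U) r ⊆ U.orthogonalProjectionOnto '' sphere (0 : E) r := by
  intro w hw
  have hwr : ‖w‖ ≤ r := mem_closedBall_zero_iff.1 hw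
  have hr : 0 ≤ r := (norm_nonneg w).trans hwr
  have horth : ⟪(w : E), √(r ^ 2 - ‖w‖ ^ 2) • e⟫ = 0 := by
    rw [inner_smul_right, Submodule.inner_right_of_mem_orthogonal w.2 he, mul_zero]
  have hnorm : ‖(w : E) + √(r ^ 2 - ‖w‖ ^ 2) • e‖ ^ 2 = r ^ 2 := by
    rw [norm_add_sq_real, horth, norm_smul, he_norm, mul_one, Real.norm_eq_abs, sq_abs,
      Real.sq_sqrt (sub_nonneg.2 (pow_le_pow_left₀ (norm_nonneg w) hwr 2)), Submodule.coe_norm]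
    ring
  refine ⟨(w : E) + √(r ^ 2 - ‖w‖ ^ 2) • e, ?_, ?_⟩
  · exact mem_sphere_zero_iff_norm.2 ((pow_left_inj₀ (norm_nonneg _) hr two_ne_zero).1 hnorm)
  · rw [map_add, map_smul, Submodule.orthogonalProjectionOnto_mem_subspace_eq_self,
      Submodule.orthogonalProjectionOnto_eq_zero_iff.2 he, smul_zero, add_zero]

variable [MeasurableSpace E] [BorelSpace E] {n : ℕ} [Fact (finrank ℝ E = n + 1)]

lemma hausdorffMeasure_sphere_pos {r : ℝ} (hr : 0 < r) : 0 < μH[n] (sphere (0 : E) r) := by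
  have : FiniteDimensional ℝ E := .of_fact_finrank_eq_succ n
  have : Nontrivial E := nontrivial_of_finrank_eq_succ (Fact.out : finrank ℝ E = n + 1)
  obtain ⟨e, he⟩ := exists_norm_eq E zero_le_one
  have hdim : finrank ℝ (ℝ ∙ e)ᗮ = n :=
    Submodule.finrank_orthogonal_span_singleton (norm_ne_zero_iff.1 (by simp [he]))
  have he_mem : e ∈ (ℝ ∙ e)ᗮᗮ :=
    Submodule.le_orthogonal_orthogonal _ (Submodule.mem_span_singleton_self e)
  have hball : 0 < μH[n] (closedBall (0 : (ℝ ∙ e)ᗮ) r) := by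
    rw [← hdim]
    exact measure_closedBall_pos _ _ hr
  calc 0 < μH[n] (closedBall (0 : (ℝ ∙ e)ᗮ) r) := hball
    _ ≤ μH[n] ((ℝ ∙ e)ᗮ.orthogonalProjectionOnto '' sphere (0 : E) r) :=
        measure_mono (closedBall_subset_orthogonalProjectionOnto_image_sphere _ he_mem he r)
    _ ≤ μH[n] (sphere (0 : E) r) :=
        hausdorffMeasure_orthogonalProjectionOnto_le _ _ _ (Nat.cast_nonneg n)

lemma hausdorffMeasure_coe_image_sphere_lt_top {A : Set (sphere (0 : E) 1)} (hA : IsCompact A)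
    {v : sphere (0 : E) 1} (hv : v ∉ A) : μH[n] ((↑) '' A : Set E) < ∞ := by
  have : FiniteDimensional ℝ E := .of_fact_finrank_eq_succ n
  have hv_norm : ‖(v : E)‖ = 1 := norm_eq_of_mem_sphere v
  have hdim : finrank ℝ (ℝ ∙ (v : E))ᗮ = n :=
    Submodule.finrank_orthogonal_span_singleton (ne_zero_of_mem_unit_sphere v)
  let φ := stereographic hv_norm
  have hA_source : A ⊆ φ.source := by
    rw [stereographic_source]
    exact subset_compl_singleton_iff.2 hv
  have hA_image : (↑) '' A ⊆ (fun w : (ℝ ∙ (v : E))ᗮ ↦ stereoInvFunAux (v : E) w) '' (φ '' A) := by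
    rintro _ ⟨x, hx, rfl⟩
    exact ⟨φ x, mem_image_of_mem φ hx, congrArg Subtype.val (φ.left_inv (hA_source hx))⟩
  have hsmooth : ContDiff ℝ 1 fun w : (ℝ ∙ (v : E))ᗮ ↦ stereoInvFunAux (v : E) w :=
    contDiff_stereoInvFunAux.comp (ℝ ∙ (v : E))ᗮ.subtypeL.contDiff
  have hlt := hausdorffMeasure_image_lt_top_of_locallyLipschitz hsmooth.locallyLipschitz
    (hA.image_of_continuousOn (φ.continuousOn.mono hA_source))
  rw [hdim] at hlt
  exact (measure_mono hA_image).trans_lt hlt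

lemma hausdorffMeasure_unitSphere_lt_top : μH[n] (sphere (0 : E) 1) < ∞ := by
  have : FiniteDimensional ℝ E := .of_fact_finrank_eq_succ n
  have : Nontrivial E := nontrivial_of_finrank_eq_succ (Fact.out : finrank ℝ E = n + 1)
  obtain ⟨e, he⟩ := exists_norm_eq E zero_le_one
  let v : sphere (0 : E) 1 := ⟨e, mem_sphere_zero_iff_norm.2 he⟩
  let hemisphere (u : sphere (0 : E) 1) : Set (sphere (0 : E) 1) := {x | ⟪(u : E), x⟫ ≤ 0}
  have hlt (u : sphere (0 : E) 1) : μH[n] ((↑) '' hemisphere u : Set E) < ∞ := by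
    refine hausdorffMeasure_coe_image_sphere_lt_top
      (isClosed_le (by fun_prop) continuous_const).isCompact (v := u) fun hu ↦ ?_
    have hu' : ⟪(u : E), u⟫ ≤ 0 := hu
    rw [real_inner_self_eq_norm_sq, norm_eq_of_mem_sphere] at hu'
    norm_num at hu'
  have hcover : sphere (0 : E) 1 ⊆ (↑) '' hemisphere v ∪ (↑) '' hemisphere (-v) := by
    intro x hx
    rcases le_total ⟪e, x⟫ 0 with h | h
    · exact .inl ⟨⟨x, hx⟩, h, rfl⟩
    · exact .inr ⟨⟨x, hx⟩, by simpa [hemisphere, v] using h, rfl⟩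
  calc μH[n] (sphere (0 : E) 1) ≤ μH[n] ((↑) '' hemisphere v ∪ (↑) '' hemisphere (-v) : Set E) :=
        measure_mono hcover
    _ ≤ _ := measure_union_le _ _
    _ < ∞ := ENNReal.add_lt_top.2 ⟨hlt v, hlt (-v)⟩

lemma hausdorffMeasure_sphere_lt_top {r : ℝ} (hr : 0 < r) : μH[n] (sphere (0 : E) r) < ∞ := by
  have hsmul : sphere (0 : E) r = r • sphere (0 : E) 1 := by
    rw [smul_sphere' hr.ne', smul_zero, mul_one, Real.norm_of_nonneg hr.le]
  rw [hsmul, Measure.hausdorffMeasure_smul₀ (Nat.cast_nonneg n) hr.ne',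
    ENNReal.smul_def, smul_eq_mul]
  exact ENNReal.mul_lt_top ENNReal.coe_lt_top hausdorffMeasure_unitSphere_lt_top

end HausdorffMeasureSphere

lemma integrable_comp_dist {Ω E F : Type*} [MeasurableSpace Ω] [NormedAddCommGroup E]
    [MeasurableSpace E] [OpensMeasurableSpace E] [SecondCountableTopology E] [NormedAddCommGroup F]
    {P : Measure Ω} [IsFiniteMeasure P] {φ : ℝ → F} (hφ : Continuous φ) {f g : Ω → E}
    (hf : Measurable f) (hg : Measurable g) {a b : ℝ} (hfa : ∀ᵐ ω ∂P, ‖f ω‖ ≤ a)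
    (hgb : ∀ᵐ ω ∂P, ‖g ω‖ ≤ b) : Integrable (fun ω ↦ φ (dist (f ω) (g ω))) P := by
  obtain ⟨C, hC⟩ := (isCompact_Icc (a := 0) (b := a + b)).exists_bound_of_continuousOn
    hφ.continuousOn
  refine .of_bound (hφ.comp_aestronglyMeasurable (hf.dist hg).aestronglyMeasurable) C ?_
  filter_upwards [hfa, hgb] with ω hfω hgω
  exact hC _ ⟨dist_nonneg, (dist_le_norm_add_norm _ _).trans (add_le_add hfω hgω)⟩

lemma integrable_norm_of_ae_norm_le {E : Type*} [NormedAddCommGroup E] [MeasurableSpace E]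
    [OpensMeasurableSpace E] {μ : Measure E} [IsFiniteMeasure μ] {r : ℝ} (hμ : ∀ᵐ x ∂μ, ‖x‖ ≤ r) :
    Integrable (fun x ↦ ‖x‖) μ :=
  .of_bound continuous_norm.aestronglyMeasurable r (by simpa only [norm_norm] using hμ)

lemma norm_div_smul_eq {E : Type*} [NormedAddCommGroup E] [NormedSpace ℝ E] {y : E} {r c : ℝ}
    (hr : 0 < r) (hc : 0 ≤ c) (hy : ‖y‖ = r) : ‖(c / r) • y‖ = c := by
  rw [norm_smul, hy, Real.norm_of_nonneg (by positivity), div_mul_cancel₀ _ hr.ne']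

lemma exists_norm_eq_and_dist_eq_sub_norm {E : Type*} [NormedAddCommGroup E] [NormedSpace ℝ E]
    [Nontrivial E] {x : E} {r : ℝ} (hx : ‖x‖ ≤ r) : ∃ y : E, ‖y‖ = r ∧ dist x y = r - ‖x‖ := by
  have hr : 0 ≤ r := (norm_nonneg x).trans hx
  obtain rfl | hx0 := eq_or_ne x 0
  · obtain ⟨y, hy⟩ := exists_norm_eq E hr
    exact ⟨y, hy, by simp [hy]⟩
  · have hpos : 0 < ‖x‖ := norm_pos_iff.2 hx0
    have hnorm : ‖(r / ‖x‖) • x‖ = r := norm_div_smul_eq hpos hr rfl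
    have hray : SameRay ℝ x ((r / ‖x‖) • x) := SameRay.sameRay_nonneg_smul_right x (by positivity)
    refine ⟨(r / ‖x‖) • x, hnorm, ?_⟩
    rw [dist_eq_norm, hray.norm_sub, hnorm, abs_sub_comm, abs_of_nonneg (sub_nonneg.2 hx)]

section RotationInvariant

variable {E : Type*} [NormedAddCommGroup E] [InnerProductSpace ℝ E]

lemma dist_smul_comm_of_norm_eq {x y : E} (h : ‖x‖ = ‖y‖) (t : ℝ) :
    dist (t • x) y = dist (t • y) x := by
  rw [dist_eq_norm, dist_eq_norm, ← pow_left_inj₀ (norm_nonneg _) (norm_nonneg _) two_ne_zero,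
    norm_sub_sq_real, norm_sub_sq_real, norm_smul, norm_smul, inner_smul_left, inner_smul_left,
    real_inner_comm, h]

variable [MeasurableSpace E]

/-- Invariance of a measure under all rotations about the origin, which makes the potential
`∫ φ (d(z, x)) dμ(x)` a function of `‖z‖`. Rotations are encoded as linear isometric equivalences,
so the orientation-reversing ones are included. -/
def IsRotationInvariant (μ : Measure E) : Prop :=
  ∀ R : E ≃ₗᵢ[ℝ] E, μ.map R = μ

variable [BorelSpace E] {F : Type*} [NormedAddCommGroup F] [NormedSpace ℝ F] {μ ν : Measure E}
  {r : ℝ}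

lemma IsRotationInvariant.integral_comp_dist_eq (hμ : IsRotationInvariant μ) (φ : ℝ → F) {z w : E}
    (h : ‖z‖ = ‖w‖) : ∫ x, φ (dist z x) ∂μ = ∫ x, φ (dist w x) ∂μ := by
  let R := Submodule.reflection (ℝ ∙ (z - w))ᗮ
  have hR : R z = w := Submodule.reflection_sub h
  calc ∫ x, φ (dist z x) ∂μ = ∫ x, φ (dist w (R x)) ∂μ := by
        simp only [← hR, R.dist_map]
    _ = ∫ x, φ (dist w x) ∂μ.map R :=
        (integral_map_equiv R.toHomeomorph.toMeasurableEquiv fun x ↦ φ (dist w x)).symm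
    _ = ∫ x, φ (dist w x) ∂μ := by rw [hμ R]

lemma IsRotationInvariant.integral_comp_dist_smul_eq (hν : IsRotationInvariant ν)
    (hν_norm : ∀ᵐ y ∂ν, ‖y‖ = r) (φ : ℝ → F) {t : ℝ} {x z : E} (hx : ‖x‖ = r)
    (hz : ‖z‖ = ‖t • x‖) : ∫ y, φ (dist (t • y) x) ∂ν = ∫ y, φ (dist z y) ∂ν := by
  calc ∫ y, φ (dist (t • y) x) ∂ν = ∫ y, φ (dist (t • x) y) ∂ν := by
        refine integral_congr_ae (hν_norm.mono fun y hy ↦ ?_)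
        simp only [dist_smul_comm_of_norm_eq (hy.trans hx.symm)]
    _ = ∫ y, φ (dist z y) ∂ν := hν.integral_comp_dist_eq φ hz.symm

variable [SecondCountableTopology E] {φ : ℝ → ℝ}

lemma IsRotationInvariant.integral_comp_dist_le_of_norm_le [IsProbabilityMeasure ν]
    (hν : IsRotationInvariant ν) (hr : 0 < r) (hν_norm : ∀ᵐ y ∂ν, ‖y‖ = r) {K : ℝ≥0}
    (hφ : LipschitzWith K φ) {x : E} (hx : ‖x‖ ≤ r) (z : E) :
    ∫ y, φ (dist z y) ∂ν ≤ ∫ y, φ (dist ((‖z‖ / r) • y) x) ∂ν + K * (r - ‖x‖) := by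
  obtain ⟨y₀, hy₀⟩ := hν_norm.exists
  have : Nontrivial E := ⟨y₀, 0, norm_pos_iff.1 (hy₀ ▸ hr)⟩
  obtain ⟨x', hx'_norm, hx'_dist⟩ := exists_norm_eq_and_dist_eq_sub_norm hx
  have hsmul_norm {y : E} (hy : ‖y‖ = r) : ‖(‖z‖ / r) • y‖ = ‖z‖ :=
    norm_div_smul_eq hr (norm_nonneg z) hy
  have hint (u : E) : Integrable (fun y ↦ φ (dist ((‖z‖ / r) • y) u)) ν :=
    integrable_comp_dist hφ.continuous (by fun_prop) measurable_const
      (hν_norm.mono fun y hy ↦ (hsmul_norm hy).le) (ae_of_all _ fun _ ↦ le_rfl)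
  have hpointwise (w : E) : φ (dist w x') ≤ φ (dist w x) + K * (r - ‖x‖) :=
    calc φ (dist w x') ≤ φ (dist w x) + K * dist (dist w x') (dist w x) := hφ.le_add_mul _ _
      _ ≤ φ (dist w x) + K * (r - ‖x‖) := by
          rw [← hx'_dist, dist_comm x x']
          gcongr
          exact dist_dist_dist_le_right w x' x
  calc ∫ y, φ (dist z y) ∂ν = ∫ y, φ (dist ((‖z‖ / r) • y) x') ∂ν :=
        (hν.integral_comp_dist_smul_eq hν_norm φ hx'_norm (hsmul_norm hx'_norm).symm).symm
    _ ≤ ∫ y, (φ (dist ((‖z‖ / r) • y) x) + K * (r - ‖x‖)) ∂ν :=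
        integral_mono (hint x') ((hint x).add (integrable_const _)) fun y ↦ hpointwise _
    _ = ∫ y, φ (dist ((‖z‖ / r) • y) x) ∂ν + K * (r - ‖x‖) := by
        rw [integral_add (hint x) (integrable_const _), integral_const, probReal_univ, one_smul]

lemma IsRotationInvariant.integral_comp_dist_le [IsProbabilityMeasure μ] [IsProbabilityMeasure ν]
    (hμ : IsRotationInvariant μ) (hν : IsRotationInvariant ν) (hr : 0 < r)
    (hμ_norm : ∀ᵐ x ∂μ, ‖x‖ ≤ r) (hν_norm : ∀ᵐ y ∂ν, ‖y‖ = r) {K : ℝ≥0}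
    (hφ : LipschitzWith K φ) (z : E) :
    ∫ y, φ (dist z y) ∂ν ≤ ∫ x, φ (dist z x) ∂μ + K * (r - ∫ x, ‖x‖ ∂μ) := by
  let t := ‖z‖ / r
  have hsmul_norm : ∀ᵐ y ∂ν, ‖t • y‖ = ‖z‖ :=
    hν_norm.mono fun y hy ↦ norm_div_smul_eq hr (norm_nonneg z) hy
  have hint : Integrable (fun p : E × E ↦ φ (dist (t • p.1) p.2)) (ν.prod μ) :=
    integrable_comp_dist hφ.continuous (by fun_prop) measurable_snd
      (Measure.quasiMeasurePreserving_fst.ae (hsmul_norm.mono fun _ h ↦ h.le))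
      (Measure.quasiMeasurePreserving_snd.ae hμ_norm)
  have hint_left : Integrable (fun x ↦ ∫ y, φ (dist (t • y) x) ∂ν) μ := hint.integral_prod_right
  have hint_right : Integrable (fun x ↦ K * (r - ‖x‖)) μ :=
    ((integrable_const r).sub (integrable_norm_of_ae_norm_le hμ_norm)).const_mul _
  have haverage : ∫ x, ∫ y, φ (dist (t • y) x) ∂ν ∂μ = ∫ x, φ (dist z x) ∂μ :=
    calc ∫ x, ∫ y, φ (dist (t • y) x) ∂ν ∂μ = ∫ y, ∫ x, φ (dist (t • y) x) ∂μ ∂ν :=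
          (integral_integral_swap hint).symm
      _ = ∫ _, ∫ x, φ (dist z x) ∂μ ∂ν :=
          integral_congr_ae (hsmul_norm.mono fun _ hy ↦ hμ.integral_comp_dist_eq φ hy)
      _ = ∫ x, φ (dist z x) ∂μ := by rw [integral_const, probReal_univ, one_smul]
  calc ∫ y, φ (dist z y) ∂ν = ∫ _, ∫ y, φ (dist z y) ∂ν ∂μ := by
        rw [integral_const, probReal_univ, one_smul]
    _ ≤ ∫ x, (∫ y, φ (dist (t • y) x) ∂ν + K * (r - ‖x‖)) ∂μ :=
        integral_mono_ae (integrable_const _) (hint_left.add hint_right) <|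
          hμ_norm.mono fun x hx ↦ hν.integral_comp_dist_le_of_norm_le hr hν_norm hφ hx z
    _ = ∫ x, φ (dist z x) ∂μ + K * (r - ∫ x, ‖x‖ ∂μ) := by
        rw [integral_add hint_left hint_right, haverage, integral_const_mul,
          integral_sub (integrable_const r) (integrable_norm_of_ae_norm_le hμ_norm),
          integral_const, probReal_univ, one_smul]

end RotationInvariant

lemma isProbabilityMeasure_sphereUniform {m : ℕ} (hm : m ≠ 0) {r : ℝ} (hr : 0 < r) :
    IsProbabilityMeasure (sphereUniform m r) := by
  obtain ⟨n, rfl⟩ := Nat.exists_eq_add_one_of_ne_zero hm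
  have : Fact (finrank ℝ (EuclideanSpace ℝ (Fin (n + 1))) = n + 1) := ⟨finrank_euclideanSpace_fin⟩
  have hdim : ((n + 1 : ℕ) : ℝ) - 1 = n := by push_cast; ring
  rw [sphereUniform, if_neg hr.ne', hdim]
  constructor
  rw [Measure.smul_apply, Measure.restrict_apply_univ, smul_eq_mul]
  exact ENNReal.inv_mul_cancel (hausdorffMeasure_sphere_pos hr).ne'
    (hausdorffMeasure_sphere_lt_top hr).ne

lemma ae_norm_eq_sphereUniform (m : ℕ) (r : ℝ) : ∀ᵐ x ∂sphereUniform m r, ‖x‖ = r := by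
  unfold sphereUniform
  split_ifs with hr
  · simp [ae_dirac_eq, hr]
  · refine Measure.ae_smul_measure ?_ _
    filter_upwards [ae_restrict_mem isClosed_sphere.measurableSet] with x hx
    exact mem_sphere_zero_iff_norm.1 hx

lemma isRotationInvariant_sphereUniform (m : ℕ) (r : ℝ) :
    IsRotationInvariant (sphereUniform m r) := by
  intro R
  unfold sphereUniform
  split_ifs with hr
  · rw [Measure.map_dirac' R.continuous.measurable, map_zero]
  · have hpreserves := (R.toIsometryEquiv.measurePreserving_hausdorffMeasure
      ((m : ℝ) - 1)).restrict_preimage (s := sphere 0 r) isClosed_sphere.measurableSet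
    have hpreimage : R.toIsometryEquiv ⁻¹' sphere 0 r = sphere 0 r := by
      ext x
      simp
    rw [hpreimage] at hpreserves
    rw [Measure.map_smul]
    exact congrArg _ hpreserves.map_eq

lemma Hfun_eq_integral_min_dist_sub {m : ℕ} {r : ℝ} {μ : Measure (EuclideanSpace ℝ (Fin m))}
    [IsFiniteMeasure μ] (hμ : ∀ᵐ x ∂μ, ‖x‖ ≤ r) (α : ℝ) (z : EuclideanSpace ℝ (Fin m)) :
    Hfun m α r μ z = ∫ x, min (dist z x) α ∂μ - ∫ x, ‖x‖ ∂μ := by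
  have hrestrict : μ.restrict (closedBall 0 r) = μ :=
    Measure.restrict_eq_self_of_ae_mem (hμ.mono fun x hx ↦ mem_closedBall_zero_iff.2 hx)
  have hindicator : (closedBall z α).indicator (fun x ↦ α - dist z x) =
      fun x ↦ α - min (dist z x) α := by
    ext x
    by_cases hx : x ∈ closedBall z α
    · rw [indicator_of_mem hx, min_eq_left (mem_closedBall'.1 hx)]
    · rw [indicator_of_notMem hx, min_eq_right (not_le.1 (mt mem_closedBall'.2 hx)).le, sub_self]
  have hint : Integrable (fun x ↦ min (dist z x) α) μ :=
    integrable_comp_dist (φ := fun d ↦ min d α) (by fun_prop) measurable_const measurable_id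
      (ae_of_all _ fun _ ↦ le_rfl) hμ
  rw [Hfun, ← Measure.restrict_restrict isClosed_closedBall.measurableSet, hrestrict,
    ← integral_indicator isClosed_closedBall.measurableSet, hindicator,
    integral_sub (integrable_const α) (integrable_norm_of_ae_norm_le hμ),
    integral_sub (integrable_const α) hint]
  ring

theorem stmt12_general {m : ℕ} (hm : m ≠ 0) {r : ℝ} (hr : 0 < r) (α : ℝ)
    (μ : Measure (EuclideanSpace ℝ (Fin m))) [IsProbabilityMeasure μ]
    (hsupp : μ (closedBall 0 r) = 1) (hrot : IsRotationInvariant μ)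
    (z : EuclideanSpace ℝ (Fin m)) : Tfun m α r z ≤ Hfun m α r μ z := by
  have := isProbabilityMeasure_sphereUniform hm hr
  have hν_norm := ae_norm_eq_sphereUniform m r
  have hμ_norm : ∀ᵐ x ∂μ, ‖x‖ ≤ r := by
    filter_upwards [(mem_ae_iff_prob_eq_one isClosed_closedBall.measurableSet).2 hsupp] with x hx
    exact mem_closedBall_zero_iff.1 hx
  have hmean : ∫ x, ‖x‖ ∂sphereUniform m r = r := by
    rw [integral_congr_ae hν_norm, integral_const, probReal_univ, one_smul]
  have hcompare := hrot.integral_comp_dist_le (isRotationInvariant_sphereUniform m r) hr hμ_norm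
    hν_norm (LipschitzWith.id.min_const α) z
  rw [Tfun, Hfun_eq_integral_min_dist_sub (hν_norm.mono fun _ h ↦ h.le),
    Hfun_eq_integral_min_dist_sub hμ_norm, hmean]
  simp only [id, NNReal.coe_one, one_mul] at hcompare
  linarith

/-- For `m ≥ 2`, `μ` a rotation-invariant probability measure on `B_r(0) ⊂ ℝ^m` and
`α > r`, one has `H^{(α,μ,m)}(z) ≥ T^{(α,m)}(z)` for every `z ∈ B_r(0)`. -/
theorem stmt12 (m : ℕ) (hm : 2 ≤ m) (r α : ℝ) (hr : 0 < r) (hα : r < α)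
    (μ : Measure (EuclideanSpace ℝ (Fin m))) [IsProbabilityMeasure μ]
    (hsupp : μ (closedBall 0 r) = 1)
    (hrot : ∀ R : EuclideanSpace ℝ (Fin m) ≃ₗᵢ[ℝ] EuclideanSpace ℝ (Fin m),
      μ.map R = μ)
    (z : EuclideanSpace ℝ (Fin m)) (hz : z ∈ closedBall (0 : EuclideanSpace ℝ (Fin m)) r) :
    Tfun m α r z ≤ Hfun m α r μ z := by
  exact stmt12_general (by omega) hr α μ hsupp hrot z
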